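/- For all words a, b, c ∈ M one has ā b̄ c̄ = − c̄ b̄ ā in A_{3,d}, where ā = a − a^T. -/

import Mathlib

open FreeAlgebra MulOpposite

/-- The alphabet: `(k, false)` is the letter `x_{k+1}`, `(k, true)` is `x_{k+1}ᵀ`. -/
abbrev Ltr (d : ℕ) := Fin d × Bool

/-- The free (unital) associative algebra on the `2d` letters.  The free non-unital
algebra `M_F` sits inside it as the span of the nonempty words. -/
abbrev FA (F : Type) [Field F] (d : ℕ) := FreeAlgebra F (Ltr d)

variable (F : Type) [Field F] (d : ℕ)

/-- The word in the free algebra corresponding to a list of letters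
(the empty list gives `1`, the unit). -/
def wordOf (l : List (Ltr d)) : FA F d := (l.map (FreeAlgebra.ι F)).prod

/-- The transpose: the linear anti-automorphism with `x ↦ xᵀ`, `xᵀ ↦ x`. -/
def tp (a : FA F d) : FA F d :=
  ((FreeAlgebra.lift F fun p : Ltr d => op (FreeAlgebra.ι F (p.1, !p.2))) a).unop

/-- `ā = a - aᵀ`. -/
def bar (a : FA F d) : FA F d := a - tp F d a

/-- `T(a,b,c) = a b̄ c̄ + b̄ aᵀ c̄ + b̄ c̄ a`. -/
def Trel (a b c : FA F d) : FA F d :=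
  a * bar F d b * bar F d c + bar F d b * tp F d a * bar F d c + bar F d b * bar F d c * a

/-- The copy of the free non-unital algebra `M_F`, i.e. the span of the nonempty words. -/
def MFsub : Submodule F (FA F d) :=
  Submodule.span F {w | ∃ l : List (Ltr d), l ≠ [] ∧ w = wordOf F d l}

/-- The two-sided ideal such that `A_{3,d} = M_F / (idealA ∩ M_F)`: it is generated by
`a³` for `a ∈ M_F` together with `T(a,b,c)` for `a, b, c ∈ M_F`.  (Since all generators lie in
`M_F`, its intersection with `M_F` is exactly the two-sided ideal of the non-unital algebra
`M_F` generated by these elements; in fact it is contained in `M_F`.)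
An element `u ∈ M_F` is zero in `A_{3,d}` iff `u ∈ idealA F d`. -/
def idealA : TwoSidedIdeal (FA F d) :=
  TwoSidedIdeal.span
    ({x | ∃ a ∈ MFsub F d, x = a ^ 3} ∪
     {x | ∃ a ∈ MFsub F d, ∃ b ∈ MFsub F d, ∃ c ∈ MFsub F d, x = Trel F d a b c})

/-! Since `b̄ᵀ = -b̄`, the element `T(ā, b, c)` equals `ā b̄ c̄ - b̄ [ā, c̄]`. The commutator
changes sign when `a` and `c` are exchanged, so `T(ā, b, c) + T(c̄, b, a) = ā b̄ c̄ + c̄ b̄ ā`. -/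

section

variable {F d}

theorem tp_add (a b : FA F d) : tp F d (a + b) = tp F d a + tp F d b := by simp [tp]

theorem tp_sub (a b : FA F d) : tp F d (a - b) = tp F d a - tp F d b := by simp [tp]

theorem tp_smul (r : F) (a : FA F d) : tp F d (r • a) = r • tp F d a := by simp [tp]

theorem tp_mul (a b : FA F d) : tp F d (a * b) = tp F d b * tp F d a := by simp [tp]

theorem tp_algebraMap (r : F) : tp F d (algebraMap F (FA F d) r) = algebraMap F (FA F d) r := by
  simp [tp]

theorem tp_ι (p : Ltr d) : tp F d (ι F p) = ι F (p.1, !p.2) := by simp [tp]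

theorem tp_tp (a : FA F d) : tp F d (tp F d a) = a := by
  induction a using FreeAlgebra.induction with
  | grade0 r => rw [tp_algebraMap, tp_algebraMap]
  | grade1 p => rw [tp_ι, tp_ι, Bool.not_not]
  | mul a b iha ihb => rw [tp_mul, tp_mul, iha, ihb]
  | add a b iha ihb => rw [tp_add, tp_add, iha, ihb]

theorem tp_bar (a : FA F d) : tp F d (bar F d a) = -bar F d a := by
  rw [bar, tp_sub, tp_tp, neg_sub]

theorem wordOf_cons (p : Ltr d) (l : List (Ltr d)) :
    wordOf F d (p :: l) = ι F p * wordOf F d l := by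
  simp [wordOf]

theorem tp_wordOf (l : List (Ltr d)) :
    tp F d (wordOf F d l) = wordOf F d (l.map fun p => (p.1, !p.2)).reverse := by
  induction l with
  | nil => simp [tp, wordOf]
  | cons p l ih =>
    rw [wordOf_cons, tp_mul, ih, tp_ι]
    simp [wordOf]

theorem wordOf_mem_MFsub {l : List (Ltr d)} (hl : l ≠ []) : wordOf F d l ∈ MFsub F d :=
  Submodule.subset_span ⟨l, hl, rfl⟩

theorem tp_mem_MFsub {a : FA F d} (ha : a ∈ MFsub F d) : tp F d a ∈ MFsub F d := by
  induction ha using Submodule.span_induction with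
  | mem w hw =>
    obtain ⟨l, hl, rfl⟩ := hw
    rw [tp_wordOf]
    exact wordOf_mem_MFsub (by simpa using hl)
  | zero => simp [tp]
  | add a b _ _ iha ihb => rw [tp_add]; exact add_mem iha ihb
  | smul r a _ iha => rw [tp_smul]; exact Submodule.smul_mem _ r iha

theorem bar_mem_MFsub {a : FA F d} (ha : a ∈ MFsub F d) : bar F d a ∈ MFsub F d :=
  sub_mem ha (tp_mem_MFsub ha)

theorem Trel_bar (a b c : FA F d) :
    Trel F d (bar F d a) b c =
      bar F d a * bar F d b * bar F d c - bar F d b * ⁅bar F d a, bar F d c⁆ := by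
  rw [Trel, tp_bar, Ring.lie_def]
  noncomm_ring

theorem Trel_bar_add_Trel_bar (a b c : FA F d) :
    Trel F d (bar F d a) b c + Trel F d (bar F d c) b a =
      bar F d a * bar F d b * bar F d c + bar F d c * bar F d b * bar F d a := by
  have lie_skew : ⁅bar F d c, bar F d a⁆ = -⁅bar F d a, bar F d c⁆ := by
    rw [Ring.lie_def, Ring.lie_def, neg_sub]
  rw [Trel_bar, Trel_bar, lie_skew, mul_neg]
  abel

theorem Trel_mem_idealA {a b c : FA F d} (ha : a ∈ MFsub F d) (hb : b ∈ MFsub F d)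
    (hc : c ∈ MFsub F d) : Trel F d a b c ∈ idealA F d :=
  TwoSidedIdeal.subset_span (Or.inr ⟨a, ha, b, hb, c, hc, rfl⟩)

theorem stmt8_general {I : TwoSidedIdeal (FA F d)}
    (hI : ∀ a ∈ MFsub F d, ∀ b ∈ MFsub F d, ∀ c ∈ MFsub F d, Trel F d a b c ∈ I)
    {a b c : FA F d} (ha : a ∈ MFsub F d) (hb : b ∈ MFsub F d) (hc : c ∈ MFsub F d) :
    bar F d a * bar F d b * bar F d c + bar F d c * bar F d b * bar F d a ∈ I := by
  rw [← Trel_bar_add_Trel_bar]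
  exact I.add_mem (hI _ (bar_mem_MFsub ha) b hb c hc) (hI _ (bar_mem_MFsub hc) b hb a ha)

end

/-- `ā b̄ c̄ = − c̄ b̄ ā` in `A_{3,d}` for all words `a, b, c`. -/
theorem stmt8 (F : Type) [Field F] [Infinite F] (h2 : ringChar F ≠ 2) (d : ℕ)
    (a b c : List (Ltr d)) (ha : a ≠ []) (hb : b ≠ []) (hc : c ≠ []) :
    bar F d (wordOf F d a) * bar F d (wordOf F d b) * bar F d (wordOf F d c) +
      bar F d (wordOf F d c) * bar F d (wordOf F d b) * bar F d (wordOf F d a)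
      ∈ idealA F d :=
  stmt8_general (fun _ hx _ hy _ hz => Trel_mem_idealA hx hy hz)
    (wordOf_mem_MFsub ha) (wordOf_mem_MFsub hb) (wordOf_mem_MFsub hc)
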